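/- Let B be an n×n real symmetric matrix, g ∈ ℝⁿ, and Δ > 0. Suppose s* ∈ ℝⁿ satisfies ‖s*‖₂ ≤ Δ and there exists σ* ≥ 0 such that (B + σ*I) s* = −g, σ*(Δ − ‖s*‖₂) = 0, and B + σ*I is positive definite. Then s* is the unique global minimizer of q(s) = gᵀs + (1/2) sᵀBs over the closed Euclidean ball {s ∈ ℝⁿ : ‖s‖₂ ≤ Δ}. -/

import Mathlib

open Matrix

/-!
Adding `(σ / 2) * ‖s‖ ^ 2` to `q` replaces `B` by the positive definite `B + σI`, so the regularized
model is strictly convex and its stationary point `s*` is its strict unconstrained minimizer.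
Complementarity says that the added term attains its maximum over the ball at `s*`; hence
subtracting it again keeps `s*` strictly below every other point of the ball.
-/

open scoped RealInnerProductSpace

section InnerProductSpace

variable {E : Type*} [SeminormedAddCommGroup E] [InnerProductSpace ℝ E]

/-- The quadratic model `q(s) = ⟪g, s⟫ + ½ ⟪s, T s⟫` minimized in the trust-region subproblem, with
the Hessian matrix `B` of the Euclidean case encoded as a linear map `T`. -/
noncomputable def quadraticModel (T : E →ₗ[ℝ] E) (g s : E) : ℝ :=
  ⟪g, s⟫ + (1 / 2) * ⟪s, T s⟫

theorem quadraticModel_eq_taylor {T : E →ₗ[ℝ] E} (hT : T.IsSymmetric) (g s t : E) :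
    quadraticModel T g s =
      quadraticModel T g t + ⟪T t + g, s - t⟫ + (1 / 2) * ⟪s - t, T (s - t)⟫ := by
  have hst : ⟪s, T t⟫ = ⟪t, T s⟫ := by rw [← hT s t, real_inner_comm]
  simp only [quadraticModel, map_sub, inner_add_left, inner_sub_left, inner_sub_right,
    real_inner_comm _ (T t)]
  linarith

theorem quadraticModel_add_smul_id (T : E →ₗ[ℝ] E) (σ : ℝ) (g s : E) :
    quadraticModel (T + σ • LinearMap.id) g s = quadraticModel T g s + (σ / 2) * ‖s‖ ^ 2 := by
  simp only [quadraticModel, LinearMap.add_apply, LinearMap.smul_apply, LinearMap.id_apply,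
    inner_add_right, real_inner_smul_right, real_inner_self_eq_norm_sq]
  ring

theorem quadraticModel_lt_of_stationary {T : E →ₗ[ℝ] E} (hT : T.IsSymmetric)
    (hpos : ∀ v ≠ 0, 0 < ⟪v, T v⟫) {g s t : E} (ht : T t = -g) (hne : s ≠ t) :
    quadraticModel T g t < quadraticModel T g s := by
  have hcurv : 0 < ⟪s - t, T (s - t)⟫ := hpos _ (sub_ne_zero.mpr hne)
  have hgrad : ⟪T t + g, s - t⟫ = 0 := by rw [ht, neg_add_cancel, inner_zero_left]
  rw [quadraticModel_eq_taylor hT g s t, hgrad]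
  linarith

theorem mul_sq_le_mul_sq_of_mul_sub_eq_zero {R : Type*} [CommRing R] [LinearOrder R]
    [IsStrictOrderedRing R] {σ a b Δ : R} (hσ : 0 ≤ σ) (ha : 0 ≤ a) (haΔ : a ≤ Δ)
    (hcomp : σ * (Δ - b) = 0) : σ * a ^ 2 ≤ σ * b ^ 2 := by
  obtain rfl | hb := mul_eq_zero.mp hcomp
  · simp
  · obtain rfl := sub_eq_zero.mp hb
    gcongr

theorem trust_region_unique_global_min_general {T : E →ₗ[ℝ] E} (hT : T.IsSymmetric) {g t : E}
    {σ Δ : ℝ} (hσ : 0 ≤ σ) (hstat : T t + σ • t = -g) (hcomp : σ * (Δ - ‖t‖) = 0)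
    (hpos : ∀ v ≠ 0, 0 < ⟪v, T v + σ • v⟫) {s : E} (hs : ‖s‖ ≤ Δ) (hne : s ≠ t) :
    quadraticModel T g t < quadraticModel T g s := by
  have hsymm : (T + σ • LinearMap.id).IsSymmetric := hT.add (LinearMap.IsSymmetric.id.smul rfl)
  have hreg : quadraticModel (T + σ • LinearMap.id) g t <
      quadraticModel (T + σ • LinearMap.id) g s :=
    quadraticModel_lt_of_stationary hsymm hpos hstat hne
  have hnorm : σ * ‖s‖ ^ 2 ≤ σ * ‖t‖ ^ 2 :=
    mul_sq_le_mul_sq_of_mul_sub_eq_zero hσ (norm_nonneg s) hs hcomp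
  rw [quadraticModel_add_smul_id, quadraticModel_add_smul_id] at hreg
  linarith

end InnerProductSpace

section Matrix

variable {ι : Type*} [Fintype ι] [DecidableEq ι]

theorem quadraticModel_toEuclideanLin (B : Matrix ι ι ℝ) (g s : EuclideanSpace ℝ ι) :
    quadraticModel (toEuclideanLin B) g s = g ⬝ᵥ s + (1 / 2) * s ⬝ᵥ B *ᵥ s := by
  simp [quadraticModel, EuclideanSpace.inner_eq_star_dotProduct, dotProduct_comm]

theorem inner_toEuclideanLin_self_pos {A : Matrix ι ι ℝ} (hA : A.PosDef) {v : EuclideanSpace ℝ ι}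
    (hv : v ≠ 0) : 0 < ⟪v, toEuclideanLin A v⟫ := by
  simpa [EuclideanSpace.inner_eq_star_dotProduct, dotProduct_comm] using
    hA.dotProduct_mulVec_pos ((WithLp.ofLp_eq_zero 2).not.mpr hv)

theorem toEuclideanLin_add_smul_one_apply (B : Matrix ι ι ℝ) (σ : ℝ) (v : EuclideanSpace ℝ ι) :
    toEuclideanLin (B + σ • (1 : Matrix ι ι ℝ)) v = toEuclideanLin B v + σ • v := by
  simp

end Matrix

/-- If `‖s*‖ ≤ Δ` and there is `σ* ≥ 0` with `(B + σ*I)s* = -g`,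
`σ*(Δ - ‖s*‖) = 0` and `B + σ*I` positive definite, then `s*` is the unique
global minimizer of `q(s) = gᵀs + ½ sᵀBs` over the closed ball `‖s‖ ≤ Δ`. -/
theorem trust_region_unique_global_min (n : ℕ) (B : Matrix (Fin n) (Fin n) ℝ)
    (hB : B.IsSymm) (g : EuclideanSpace ℝ (Fin n)) (Δ : ℝ) (hΔ : 0 < Δ)
    (sstar : EuclideanSpace ℝ (Fin n)) (hs : ‖sstar‖ ≤ Δ)
    (σstar : ℝ) (hσ : 0 ≤ σstar)
    (heq : (B + σstar • (1 : Matrix (Fin n) (Fin n) ℝ)).mulVec sstar = -g)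
    (hcomp : σstar * (Δ - ‖sstar‖) = 0)
    (hpd : (B + σstar • (1 : Matrix (Fin n) (Fin n) ℝ)).PosDef) :
    ∀ s : EuclideanSpace ℝ (Fin n), ‖s‖ ≤ Δ → s ≠ sstar →
      g ⬝ᵥ sstar + (1 / 2) * sstar ⬝ᵥ B.mulVec sstar <
        g ⬝ᵥ s + (1 / 2) * s ⬝ᵥ B.mulVec s := by
  intro s hsΔ hne
  have hT : (toEuclideanLin B).IsSymmetric :=
    isSymmetric_toEuclideanLin_iff.mpr (isHermitian_iff_isSymm.mpr hB)
  have hstat : toEuclideanLin B sstar + σstar • sstar = -g := by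
    rw [← toEuclideanLin_add_smul_one_apply]
    exact congrArg (WithLp.toLp 2) heq
  have hpos (v : EuclideanSpace ℝ (Fin n)) (hv : v ≠ 0) :
      0 < ⟪v, toEuclideanLin B v + σstar • v⟫ := by
    rw [← toEuclideanLin_add_smul_one_apply]
    exact inner_toEuclideanLin_self_pos hpd hv
  simpa only [quadraticModel_toEuclideanLin] using
    trust_region_unique_global_min_general hT hσ hstat hcomp hpos hsΔ hne
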